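/- arXiv:1202.2935 — 2 statements merged into one kernel-verified Lean document; each statement's English description precedes it below -/
import Mathlib

section
/- There exists a three-dimensional complex linear subspace W of ℂ^6 such that for each i = 1, 2, 3, 4 the intersection W ∩ S_i is one-dimensional, and for all i ≠ j the intersection (W ∩ S_i) ∩ S_j is the zero subspace. (Equivalently: there is a 2-plane in ℙ^5 that intersects each of the four 2-planes Σ_1, Σ_2, Σ_3, Σ_4 in a single point not lying on any of the other three planes.) -/
/-!
Any two of the four coordinate subspaces meet in a coordinate line, so one can choose
`v i ∈ S i` with all three available coordinates nonzero (hence `v i ∉ S j` for `j ≠ i`), and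
with opposite coefficients along each shared line. Then `v 0 + v 1 + v 2 + v 3 = 0`, and `W` is
the span of the `v i`, which has dimension three. It is parametrized by
`(a, b, c) ↦ a • v 0 + b • v 1 + c • v 2 = (c, a - b, a, b, a - c, b - c)`,
and in these parameters membership in `S 0, S 1, S 2, S 3` reads
`b = c = 0`, `a = c = 0`, `a = b = 0`, `a = b = c` respectively: four distinct lines.
-/

/-- The four three-dimensional coordinate subspaces of ℂ^6 (affine cones over
the torus-invariant 2-planes Σ₁,…,Σ₄ in ℙ⁵):
`S 0 = {x : x₀ = x₃ = x₅ = 0}`, `S 1 = {x : x₀ = x₂ = x₄ = 0}`,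
`S 2 = {x : x₁ = x₂ = x₃ = 0}`, `S 3 = {x : x₁ = x₄ = x₅ = 0}`. -/
noncomputable def S : Fin 4 → Submodule ℂ (Fin 6 → ℂ) :=
  ![ LinearMap.ker (LinearMap.proj 0 : (Fin 6 → ℂ) →ₗ[ℂ] ℂ) ⊓
       LinearMap.ker (LinearMap.proj 3 : (Fin 6 → ℂ) →ₗ[ℂ] ℂ) ⊓
       LinearMap.ker (LinearMap.proj 5 : (Fin 6 → ℂ) →ₗ[ℂ] ℂ),
     LinearMap.ker (LinearMap.proj 0 : (Fin 6 → ℂ) →ₗ[ℂ] ℂ) ⊓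
       LinearMap.ker (LinearMap.proj 2 : (Fin 6 → ℂ) →ₗ[ℂ] ℂ) ⊓
       LinearMap.ker (LinearMap.proj 4 : (Fin 6 → ℂ) →ₗ[ℂ] ℂ),
     LinearMap.ker (LinearMap.proj 1 : (Fin 6 → ℂ) →ₗ[ℂ] ℂ) ⊓
       LinearMap.ker (LinearMap.proj 2 : (Fin 6 → ℂ) →ₗ[ℂ] ℂ) ⊓
       LinearMap.ker (LinearMap.proj 3 : (Fin 6 → ℂ) →ₗ[ℂ] ℂ),
     LinearMap.ker (LinearMap.proj 1 : (Fin 6 → ℂ) →ₗ[ℂ] ℂ) ⊓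
       LinearMap.ker (LinearMap.proj 4 : (Fin 6 → ℂ) →ₗ[ℂ] ℂ) ⊓
       LinearMap.ker (LinearMap.proj 5 : (Fin 6 → ℂ) →ₗ[ℂ] ℂ) ]

/-- The parametrization `(a, b, c) ↦ (c, a - b, a, b, a - c, b - c)` of the subspace `W`. -/
def planeParam : (Fin 3 → ℂ) →ₗ[ℂ] (Fin 6 → ℂ) where
  toFun u := ![u 2, u 0 - u 1, u 0, u 1, u 0 - u 2, u 1 - u 2]
  map_add' u v := by
    ext k; fin_cases k <;> simp <;> ring
  map_smul' r u := by
    ext k; fin_cases k <;> simp <;> ring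

lemma planeParam_apply (u : Fin 3 → ℂ) :
    planeParam u = ![u 2, u 0 - u 1, u 0, u 1, u 0 - u 2, u 1 - u 2] := rfl

lemma planeParam_injective : Function.Injective planeParam := by
  intro u v h
  rw [planeParam_apply, planeParam_apply] at h
  have h0 := congrFun h 2
  have h1 := congrFun h 3
  have h2 := congrFun h 0
  simp at h0 h1 h2
  ext k; fin_cases k <;> simp [h0, h1, h2]

/-- Parameters of the four lines in which `W` meets the subspaces `S i`. -/
def lineParam : Fin 4 → Fin 3 → ℂ :=
  ![![1, 0, 0], ![0, 1, 0], ![0, 0, 1], ![1, 1, 1]]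

lemma planeParam_mem_S_iff (i : Fin 4) (u : Fin 3 → ℂ) :
    planeParam u ∈ S i ↔ u ∈ Submodule.span ℂ {lineParam i} := by
  rw [planeParam_apply, Submodule.mem_span_singleton]
  constructor
  · intro h
    -- The scalar is the parameter at a position where `lineParam i` equals `1`.
    refine ⟨u (![0, 1, 2, 0] i), ?_⟩
    fin_cases i <;> simp [S] at h <;> ext k <;> fin_cases k <;> simp [lineParam] <;> grind
  · rintro ⟨r, rfl⟩
    fin_cases i <;> simp [S, lineParam]

lemma lineParam_ne_zero (i : Fin 4) : lineParam i ≠ 0 := by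
  fin_cases i <;> simp [lineParam]

lemma range_inf_S (i : Fin 4) :
    LinearMap.range planeParam ⊓ S i = Submodule.span ℂ {planeParam (lineParam i)} := by
  have h : (S i).comap planeParam = Submodule.span ℂ {lineParam i} := by
    ext u; exact planeParam_mem_S_iff i u
  rw [← Submodule.map_comap_eq, h, Submodule.map_span, Set.image_singleton]

/-- There exists a three-dimensional complex linear subspace `W` of `ℂ^6` such that
each intersection `W ⊓ S i` is one-dimensional and `(W ⊓ S i) ⊓ S j = 0` for `i ≠ j`;
i.e. a 2-plane in ℙ⁵ meeting each Σᵢ in a single point not on the other three planes. -/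
theorem exists_plane_meeting_each_Sigma_in_one_point :
    ∃ W : Submodule ℂ (Fin 6 → ℂ),
      Module.finrank ℂ W = 3 ∧
      (∀ i : Fin 4, Module.finrank ℂ ↥(W ⊓ S i) = 1) ∧
      (∀ i j : Fin 4, i ≠ j → (W ⊓ S i) ⊓ S j = ⊥) := by
  refine ⟨LinearMap.range planeParam, ?_, fun i => ?_, fun i j hij => ?_⟩
  · rw [LinearMap.finrank_range_of_inj planeParam_injective]
    simp
  · rw [range_inf_S]
    exact finrank_span_singleton
      ((map_ne_zero_iff _ planeParam_injective).mpr (lineParam_ne_zero i))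
  · rw [eq_bot_iff]
    rintro _ ⟨⟨⟨u, rfl⟩, hi⟩, hj⟩
    obtain ⟨r, rfl⟩ := Submodule.mem_span_singleton.mp ((planeParam_mem_S_iff i u).mp hi)
    obtain ⟨t, ht⟩ := Submodule.mem_span_singleton.mp ((planeParam_mem_S_iff j _).mp hj)
    have h0 := congrFun ht 0
    have h1 := congrFun ht 1
    have h2 := congrFun ht 2
    -- Two distinct vectors `lineParam i`, `lineParam j` are never proportional.
    have hr : r = 0 := by
      fin_cases i <;> fin_cases j <;> simp [lineParam] at hij h0 h1 h2 <;> grind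
    simp [hr]
end

section
/- Every vector of ℝ^5 is a nonnegative real linear combination of the ten vectors e_1, e_2, e_3, e_4, e_5, (-1,-1,-1,-1,-1), (1,1,1,0,0), (1,0,0,1,1), (-1,0,-1,0,-1), (-1,-1,0,-1,0); that is, these ten ray vectors positively span ℝ^5. (This is the underlying fact for the completeness of the toric varieties whose fans have this 1-skeleton.) -/
/-!
The six vectors `e₁, …, e₅` and `-(e₁ + ⋯ + e₅)` already positively span `ℝ^5`: for any `M`,
`v = ∑ i, (v i + M) • e i + M • (-1, -1, -1, -1, -1)`, and all coefficients are nonnegative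
once `M ≥ |v i|` for every `i`; `M = ∑ i, |v i|` works.
-/

/-- The ten ray vectors `e₁,…,e₅, (-1,-1,-1,-1,-1), (1,1,1,0,0), (1,0,0,1,1),
(-1,0,-1,0,-1), (-1,-1,0,-1,0)` in `ℝ^5`: the columns of the matrix `Aᵀ`, i.e. the
primitive ray generators of the 1-skeleton of the toric variety `W`. -/
def ray : Fin 10 → (Fin 5 → ℝ) :=
  ![ ![1, 0, 0, 0, 0],
     ![0, 1, 0, 0, 0],
     ![0, 0, 1, 0, 0],
     ![0, 0, 0, 1, 0],
     ![0, 0, 0, 0, 1],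
     ![-1, -1, -1, -1, -1],
     ![1, 1, 1, 0, 0],
     ![1, 0, 0, 1, 1],
     ![-1, 0, -1, 0, -1],
     ![-1, -1, 0, -1, 0] ]

/-- Every vector of `ℝ^5` is a nonnegative real linear combination of the ten ray
vectors: they positively span `ℝ^5`.  (This underlies the completeness of the toric
varieties whose fans have this 1-skeleton.) -/
theorem rays_positively_span :
    ∀ v : Fin 5 → ℝ, ∃ c : Fin 10 → ℝ,
      (∀ k : Fin 10, 0 ≤ c k) ∧ v = ∑ k : Fin 10, c k • ray k := by
  intro v
  -- `M` dominates every `-v i`, so all `v i + M` are nonnegative.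
  set M : ℝ := ∑ i, |v i| with hM
  have hle : ∀ i, |v i| ≤ M := fun i =>
    Finset.single_le_sum (f := fun j => |v j|) (fun j _ => abs_nonneg _) (Finset.mem_univ i)
  have hnn : ∀ i, 0 ≤ v i + M := fun i => by
    linarith [hle i, neg_abs_le (v i)]
  have hM0 : 0 ≤ M := (abs_nonneg _).trans (hle 0)
  clear_value M
  refine ⟨![v 0 + M, v 1 + M, v 2 + M, v 3 + M, v 4 + M, M, 0, 0, 0, 0], ?_, ?_⟩
  · intro k
    fin_cases k <;> simp [hnn, hM0]
  · ext i
    fin_cases i <;> simp [ray, Fin.sum_univ_succ]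
end
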